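/- (Interval-point temporal connectivity via incremental MST.) Let V be a finite vertex type, G a simple graph on V, and let each edge e of G carry a time interval [a(e), b(e)] with a(e) ≤ b(e), where b : Sym2 V → ℝ is injective on the edge set of G. Fix a real t. Let G_{a≤t} be the subgraph of G consisting of edges e with a(e) ≤ t, and assume G_{a≤t} is connected. Let T_t be a spanning tree of G_{a≤t} maximizing Σ_{e ∈ edges(T_t)} b(e) among all spanning trees of G_{a≤t} (equivalently, the minimum spanning tree under weight −b). Then for all vertices u and v: u and v are connected in the subgraph G_t of G consisting of the edges e with a(e) ≤ t ≤ b(e) if and only if every edge on the unique path in T_t from u to v has b(e) ≥ t. -/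

import Mathlib

/-!
Deleting an edge `e` of `T` on the path from `u` to `v` separates `u` from `v`, so any other walk
from `u` to `v` crosses the cut by some edge `f`. Exchanging `e` for `f` gives another spanning
tree, and maximality of `T` yields `b f ≤ b e`. Hence, if all edges of the walk are still alive at
time `t`, so is `e`.
-/

open SimpleGraph

section Cut

variable {V : Type*} {G H T : SimpleGraph V} {u v w z : V} {e : Sym2 V}

theorem exists_adj_not_reachable (hG : G.Reachable u v) (hH : ¬H.Reachable u v) :
    ∃ w z, G.Adj w z ∧ ¬H.Reachable w z := by
  obtain ⟨p⟩ := hG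
  obtain ⟨d, -, hfst, hsnd⟩ := p.exists_boundary_dart {c | H.Reachable u c} .rfl hH
  exact ⟨d.fst, d.snd, d.adj, fun hd ↦ hsnd (Reachable.trans hfst hd)⟩

theorem not_reachable_deleteEdges_of_mem_edges_of_isPath (hG : G.IsAcyclic) {p : G.Walk u v}
    (hp : p.IsPath) (he : e ∈ p.edges) : ¬(G.deleteEdges {e}).Reachable u v := by
  intro huv
  obtain ⟨q, hq⟩ := huv.exists_isPath
  have hpq : p = q.mapLe (deleteEdges_le _) :=
    congrArg Subtype.val ((hG.subsingleton_path u v).elim ⟨p, hp⟩ ⟨_, hq.mapLe _⟩)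
  have heq : e ∈ q.edges := by simpa [hpq] using he
  simpa using q.edges_subset_edgeSet heq

-- An endpoint `x` of `e` is joined to at least one end of every pair that `e` separates, so three
-- pairwise separated vertices would put two of them in the component of `x`.
theorem reachable_deleteEdges_or_of_not_reachable (hG : G.Connected)
    (hwz : ¬(G.deleteEdges {e}).Reachable w z) (c : V) :
    (G.deleteEdges {e}).Reachable w c ∨ (G.deleteEdges {e}).Reachable z c := by
  obtain ⟨y, x⟩ := e
  have reachable_endpoint {c d : V} (hcd : ¬(G.deleteEdges {s(y, x)}).Reachable c d) :
      (G.deleteEdges {s(y, x)}).Reachable c x ∨ (G.deleteEdges {s(y, x)}).Reachable d x := by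
    obtain ⟨p, hp⟩ := hG.exists_isPath c d
    by_contra! hx
    exact hp.isTrail.not_mem_edges_of_not_reachable hx.1 hx.2
      (p.mem_edges_of_not_reachable_deleteEdges hcd)
  by_contra! hc
  grind [Reachable.trans, Reachable.symm]

theorem isTree_deleteEdges_sup_edge (hT : T.IsTree)
    (hwz : ¬(T.deleteEdges {e}).Reachable w z) : (T.deleteEdges {e} ⊔ edge w z).IsTree where
  connected := by
    have hne : w ≠ z := fun h ↦ hwz (h ▸ .rfl)
    have hadj : (T.deleteEdges {e} ⊔ edge w z).Adj w z := by simp [edge_adj, hne]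
    refine (connected_iff_exists_forall_reachable _).2 ⟨w, fun c ↦ ?_⟩
    obtain hwc | hzc := reachable_deleteEdges_or_of_not_reachable hT.connected hwz c
    · exact hwc.mono le_sup_left
    · exact hadj.reachable.trans (hzc.mono le_sup_left)
  isAcyclic := (hT.isAcyclic.anti (deleteEdges_le _)).sup_edge_of_not_reachable hwz

end Cut

section MaxSpanningTree

variable {V α : Type*} [AddCommMonoid α] [Preorder α]

/-- `T` is a spanning tree of `H` of greatest total weight `∑ b e`; spanning trees of `H` are
encoded as trees `T ≤ H` on the same vertex type. The weight is a `finsum`, meaningful for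
finite `V` but possibly the junk value `0` otherwise. -/
structure IsMaxSpanningTree (H : SimpleGraph V) (b : Sym2 V → α) (T : SimpleGraph V) : Prop where
  le : T ≤ H
  isTree : T.IsTree
  finsum_le : ∀ T' ≤ H, T'.IsTree → ∑ᶠ e ∈ T'.edgeSet, b e ≤ ∑ᶠ e ∈ T.edgeSet, b e

namespace IsMaxSpanningTree

variable [IsOrderedCancelAddMonoid α] [Finite V] {H T : SimpleGraph V} {b : Sym2 V → α}

theorem le_of_not_reachable_deleteEdges {w z : V} {e : Sym2 V}
    (hT : IsMaxSpanningTree H b T) (hwz : H.Adj w z)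
    (hcut : ¬(T.deleteEdges {e}).Reachable w z) : b s(w, z) ≤ b e := by
  have he : e ∈ T.edgeSet := by
    obtain ⟨p⟩ := hT.isTree.connected w z
    exact p.edges_subset_edgeSet (p.mem_edges_of_not_reachable_deleteEdges hcut)
  set F := T.deleteEdges {e} with hF
  have hTF : T.edgeSet = insert e F.edgeSet := by
    rw [hF, edgeSet_deleteEdges, Set.insert_sdiff_singleton, Set.insert_eq_of_mem he]
  have hFwz : (F ⊔ edge w z).edgeSet = insert s(w, z) F.edgeSet := by
    rw [edgeSet_sup, edgeSet_edge_of_ne hwz.ne, Set.union_singleton]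
  have he_notMem : e ∉ F.edgeSet := by simp [hF]
  have hwz_notMem : s(w, z) ∉ F.edgeSet := fun h ↦ hcut (Adj.reachable h)
  have hle : F ⊔ edge w z ≤ H :=
    sup_le ((deleteEdges_le _).trans hT.le) ((edge_le_iff H).2 (.inr hwz))
  have hsum := hT.finsum_le _ hle (isTree_deleteEdges_sup_edge hT.isTree hcut)
  rw [hFwz, hTF, finsum_mem_insert _ hwz_notMem (Set.toFinite _),
    finsum_mem_insert _ he_notMem (Set.toFinite _)] at hsum
  exact le_of_add_le_add_right hsum

theorem reachable_fromEdgeSet_iff (hT : IsMaxSpanningTree H b T) (t : α) (u v : V) :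
    (fromEdgeSet {e | e ∈ H.edgeSet ∧ t ≤ b e}).Reachable u v ↔
      ∀ p : T.Walk u v, p.IsPath → ∀ e ∈ p.edges, t ≤ b e := by
  constructor
  · intro huv p hp e he
    obtain ⟨w, z, hwz, hcut⟩ := exists_adj_not_reachable huv
      (not_reachable_deleteEdges_of_mem_edges_of_isPath hT.isTree.isAcyclic hp he)
    obtain ⟨⟨hHwz, ht⟩, -⟩ := (fromEdgeSet_adj _).1 hwz
    exact ht.trans (hT.le_of_not_reachable_deleteEdges hHwz hcut)
  · intro h
    obtain ⟨p, hp⟩ := hT.isTree.connected.exists_isPath u v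
    refine ⟨p.transfer _ fun e he ↦ ?_⟩
    have heH : e ∈ H.edgeSet := edgeSet_mono hT.le (p.edges_subset_edgeSet he)
    rw [edgeSet_fromEdgeSet]
    exact ⟨⟨heH, h p hp e he⟩, H.not_isDiag_of_mem_edgeSet heH⟩

end IsMaxSpanningTree

theorem interval_point_connectivity_general [IsOrderedCancelAddMonoid α] [Finite V]
    (G : SimpleGraph V) (a b : Sym2 V → α) (t : α) (T : SimpleGraph V)
    (hT : IsMaxSpanningTree (fromEdgeSet {e | e ∈ G.edgeSet ∧ a e ≤ t}) b T) (u v : V) :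
    (fromEdgeSet {e | e ∈ G.edgeSet ∧ a e ≤ t ∧ t ≤ b e}).Reachable u v ↔
      ∀ p : T.Walk u v, p.IsPath → ∀ e ∈ p.edges, t ≤ b e := by
  have halive : fromEdgeSet {e | e ∈ G.edgeSet ∧ a e ≤ t ∧ t ≤ b e} =
      fromEdgeSet {e | e ∈ (fromEdgeSet {e | e ∈ G.edgeSet ∧ a e ≤ t}).edgeSet ∧ t ≤ b e} := by
    ext x y
    simp only [fromEdgeSet_adj, edgeSet_fromEdgeSet, Set.mem_ofPred_eq, Set.mem_sdiff,
      Sym2.mem_diagSet, Sym2.mk_isDiag_iff]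
    tauto
  rw [halive]
  exact hT.reachable_fromEdgeSet_iff t u v

end MaxSpanningTree

/-- Interval-point temporal connectivity via incremental MST: each edge `e`
carries a time interval `[a e, b e]`; with `T_t` the spanning tree of the
subgraph of edges with `a e ≤ t` maximizing the total end time `Σ b e`, two
vertices are connected by the edges alive at time `t` iff every edge on the
(unique) path between them in `T_t` has end time `b e ≥ t`. -/
theorem interval_point_connectivity {V : Type*} [Fintype V]
    (G : SimpleGraph V) (a b : Sym2 V → ℝ)
    (hab : ∀ e ∈ G.edgeSet, a e ≤ b e) (hinj : Set.InjOn b G.edgeSet)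
    (t : ℝ)
    (hconn : (SimpleGraph.fromEdgeSet {e | e ∈ G.edgeSet ∧ a e ≤ t}).Connected)
    (T : SimpleGraph V)
    (hT : T ≤ SimpleGraph.fromEdgeSet {e | e ∈ G.edgeSet ∧ a e ≤ t})
    (hTc : T.Connected) (hTa : T.IsAcyclic)
    (hmax : ∀ T' : SimpleGraph V,
      T' ≤ SimpleGraph.fromEdgeSet {e | e ∈ G.edgeSet ∧ a e ≤ t} →
      T'.Connected → T'.IsAcyclic →
      (∑ᶠ e ∈ T'.edgeSet, b e) ≤ ∑ᶠ e ∈ T.edgeSet, b e) :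
    ∀ u v : V,
      (SimpleGraph.fromEdgeSet
          {e | e ∈ G.edgeSet ∧ a e ≤ t ∧ t ≤ b e}).Reachable u v ↔
      ∀ p : T.Walk u v, p.IsPath → ∀ e ∈ p.edges, t ≤ b e :=
  interval_point_connectivity_general G a b t T
    ⟨hT, ⟨hTc, hTa⟩, fun T' hT' hT'_tree ↦ hmax T' hT' hT'_tree.connected hT'_tree.isAcyclic⟩
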